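/- Every finitely presented system (Y,f) admits a Smale space extension with a u-resolving factor map: there exists a Smale space (X,F) and a factor map π₊ : X → Y which is injective on every unstable set of X. -/

import Mathlib

open Filter Topology Set

/-- `f` is expansive with expansive constant `c`. -/
def Expansive {X : Type*} [MetricSpace X] (f : Equiv.Perm X) (c : ℝ) : Prop :=
  ∀ p q : X, p ≠ q → ∃ n : ℤ, c < dist ((f ^ n) p) ((f ^ n) q)

/-- The ε-stable set of `x`. -/
def Ws {X : Type*} [MetricSpace X] (f : Equiv.Perm X) (ε : ℝ) (x : X) : Set X :=
  {y | ∀ n : ℕ, dist ((f ^ (n : ℤ)) x) ((f ^ (n : ℤ)) y) < ε}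

/-- The ε-unstable set of `x`. -/
def Wu {X : Type*} [MetricSpace X] (f : Equiv.Perm X) (ε : ℝ) (x : X) : Set X :=
  {y | ∀ n : ℕ, dist ((f ^ (-(n : ℤ))) x) ((f ^ (-(n : ℤ))) y) < ε}

/-- The stable set of `x`. -/
def stableSet {X : Type*} [MetricSpace X] (f : Equiv.Perm X) (x : X) : Set X :=
  {y | Filter.Tendsto (fun n : ℕ => dist ((f ^ (n : ℤ)) x) ((f ^ (n : ℤ)) y))
    Filter.atTop (nhds 0)}

/-- The unstable set of `x`. -/
def unstableSet {X : Type*} [MetricSpace X] (f : Equiv.Perm X) (x : X) : Set X :=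
  {y | Filter.Tendsto (fun n : ℕ => dist ((f ^ (-(n : ℤ))) x) ((f ^ (-(n : ℤ))) y))
    Filter.atTop (nhds 0)}

/-- Canonical coordinates: for all sufficiently small ε > 0 there is δ > 0 such that
points at distance < δ have a unique bracket `[x,y] = W^s_ε(x) ∩ W^u_ε(y)`. -/
def CanonicalCoords {X : Type*} [MetricSpace X] (f : Equiv.Perm X) : Prop :=
  ∃ ε₀ > 0, ∀ ε : ℝ, 0 < ε → ε ≤ ε₀ → ∃ δ > 0, ∀ x y : X, dist x y < δ →
    ∃! z, z ∈ Ws f ε x ∩ Wu f ε y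

/-- A Smale space: an expansive homeomorphism with canonical coordinates. -/
def IsSmale {X : Type*} [MetricSpace X] (f : Equiv.Perm X) : Prop :=
  Continuous (⇑f) ∧ Continuous (⇑f.symm) ∧ (∃ c > 0, Expansive f c) ∧ CanonicalCoords f

/-- Topological transitivity. -/
def TopTransitive {X : Type*} [MetricSpace X] (f : Equiv.Perm X) : Prop :=
  ∀ U V : Set X, IsOpen U → IsOpen V → U.Nonempty → V.Nonempty →
    ∃ n : ℕ, ((f ^ (n : ℤ)) ⁻¹' U ∩ V).Nonempty

/-- A periodic point of `f`. -/
def IsPeriodicPoint {X : Type*} [MetricSpace X] (f : Equiv.Perm X) (p : X) : Prop :=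
  ∃ N : ℕ, 0 < N ∧ (f ^ (N : ℤ)) p = p

/-- A factor map (surjective continuous semiconjugacy). -/
def IsFactorMap {X Y : Type*} [MetricSpace X] [MetricSpace Y]
    (F : Equiv.Perm X) (f : Equiv.Perm Y) (π : X → Y) : Prop :=
  Continuous π ∧ Function.Surjective π ∧ ∀ x, π (F x) = f (π x)

/-- A map is u-resolving if it is injective on unstable sets. -/
def UResolving {X Y : Type*} [MetricSpace X] (F : Equiv.Perm X) (π : X → Y) : Prop :=
  ∀ x : X, Set.InjOn π (unstableSet F x)

/-- A map is s-resolving if it is injective on stable sets. -/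
def SResolving {X Y : Type*} [MetricSpace X] (F : Equiv.Perm X) (π : X → Y) : Prop :=
  ∀ x : X, Set.InjOn π (stableSet F x)

/-- The shift map on bi-infinite sequences. -/
def shiftE (A : Type*) : Equiv.Perm (ℤ → A) where
  toFun x i := x (i + 1)
  invFun x i := x (i - 1)
  left_inv x := funext fun i => congrArg x (by ring)
  right_inv x := funext fun i => congrArg x (by ring)

/-- The word `w` occurs in the sequence `x`. -/
def OccursIn {A : Type*} {k : ℕ} (w : Fin k → A) (x : ℤ → A) : Prop :=
  ∃ i : ℤ, ∀ j : Fin k, x (i + (j : ℤ)) = w j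

/-- A subshift of finite type: the sequences avoiding a finite set of forbidden words. -/
def IsSFT {A : Type*} (S : Set (ℤ → A)) : Prop :=
  ∃ Fw : Set ((k : ℕ) × (Fin k → A)), Fw.Finite ∧
    S = {x | ∀ w ∈ Fw, ¬ OccursIn w.2 x}

/-- A one-step SFT (vertex shift) with transition rule `T`. -/
def IsOneStepSFTFor {A : Type*} (T : A → A → Prop) (S : Set (ℤ → A)) : Prop :=
  S = {x | ∀ i : ℤ, T (x i) (x (i + 1))}

/-- `S` is invariant under the shift and its inverse. -/
def ShiftInvariant {A : Type*} (S : Set (ℤ → A)) : Prop :=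
  (∀ x ∈ S, shiftE A x ∈ S) ∧ (∀ x ∈ S, (shiftE A).symm x ∈ S)

/-- A factor map from the subshift `(S, σ)` onto the system `(Y, f)`. -/
def IsSubshiftFactorMap {A Y : Type*} [TopologicalSpace A] [MetricSpace Y]
    (S : Set (ℤ → A)) (f : Equiv.Perm Y) (φ : (ℤ → A) → Y) : Prop :=
  ContinuousOn φ S ∧ φ '' S = Set.univ ∧ ∀ x ∈ S, φ (shiftE A x) = f (φ x)

/-- Topological transitivity of the shift restricted to `S`. -/
def SubshiftTransitive {A : Type*} [TopologicalSpace A] (S : Set (ℤ → A)) : Prop :=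
  ∀ U V : Set (ℤ → A), IsOpen U → IsOpen V → (U ∩ S).Nonempty → (V ∩ S).Nonempty →
    ∃ n : ℕ, (((shiftE A) ^ (n : ℤ)) ⁻¹' U ∩ V ∩ S).Nonempty

/-- The stable set of `t` in the subshift `S`: points eventually agreeing with `t`. -/
def shiftStable {A : Type*} (S : Set (ℤ → A)) (t : ℤ → A) : Set (ℤ → A) :=
  {t' ∈ S | ∃ N : ℤ, ∀ i ≥ N, t' i = t i}

/-- A finitely presented system: an expansive system that is a factor of an SFT. -/
def FinitelyPresented {Y : Type*} [MetricSpace Y] (f : Equiv.Perm Y) : Prop :=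
  Continuous (⇑f) ∧ Continuous (⇑f.symm) ∧ (∃ c > 0, Expansive f c) ∧
  ∃ (N : ℕ) (S : Set (ℤ → Fin N)), IsSFT S ∧ ShiftInvariant S ∧ S.Nonempty ∧
    ∃ φ : (ℤ → Fin N) → Y, IsSubshiftFactorMap S f φ

/-!
Let `φ : S → Y` be a presentation of `(Y, f)` by a subshift of finite type. A point of `X` is a
point `y` of `Y` with a leaf: a subset of its unstable set which contains `y` and is a union of
`φ`-images of unstable sets of `S`. Two marked leaves are close when, over a long window of times,
their marked points shadow each other and so do the points of their plaques, the pieces of leaves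
near the marked points. By expansiveness these relations form a uniformity, and limits of marked
leaves are computed by lifting to `S`, so `X` is compact.

Splicing sequences of `S` gives brackets in which the past of a point of a leaf is joined to the
future of another point without leaving the leaf. As a splice only sees a word of bounded length,
and there are finitely many of those, nearby marked leaves have a uniform holonomy: every point of
a plaque of one is forward close to a point of a plaque of the other. The bracket of `x` and `x'`
in `X` is then the leaf of `x'`, marked at the holonomy image of the marked point of `x`. Holonomy
between marked leaves that are close at arbitrarily negative times moreover identifies their leaves
once their marked points agree, which is injectivity on unstable sets.
-/

section Iterates

variable {Y : Type*} [MetricSpace Y] {f : Equiv.Perm Y} {r r' r₀ : ℝ} {I J K : Set ℤ} {p q w : Y}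

/-- The orbits of `p` and `q` stay within `r` of each other at all times in `I`. With `I` a
half-line `Iic n` or `Ici n` this is closeness in the past or in the future; with `I = Icc (-N) N`
it is a basic neighbourhood of the diagonal. -/
def CloseOn (f : Equiv.Perm Y) (r : ℝ) (I : Set ℤ) (p q : Y) : Prop :=
  ∀ i ∈ I, dist ((f ^ i) p) ((f ^ i) q) ≤ r

namespace CloseOn

lemma refl (f : Equiv.Perm Y) (hr : 0 ≤ r) (I : Set ℤ) (p : Y) : CloseOn f r I p p :=
  fun i _ => by rwa [dist_self]

lemma symm (h : CloseOn f r I p q) : CloseOn f r I q p :=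
  fun i hi => dist_comm ((f ^ i) p) _ ▸ h i hi

lemma trans (h : CloseOn f r I p q) (h' : CloseOn f r' J q w) :
    CloseOn f (r + r') (I ∩ J) p w :=
  fun i hi => (dist_triangle _ _ _).trans (add_le_add (h i hi.1) (h' i hi.2))

lemma mono (h : CloseOn f r I p q) (hr : r ≤ r') (hJ : J ⊆ I) : CloseOn f r' J p q :=
  fun i hi => (h i (hJ hi)).trans hr

lemma mono_radius (h : CloseOn f r I p q) (hr : r ≤ r') : CloseOn f r' I p q :=
  h.mono hr Subset.rfl

lemma mono_times (h : CloseOn f r I p q) (hJ : J ⊆ I) : CloseOn f r J p q :=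
  h.mono le_rfl hJ

lemma glue (h : CloseOn f r I p q) (h' : CloseOn f r' J p q) (hr : r ≤ r₀) (hr' : r' ≤ r₀)
    (hK : K ⊆ I ∪ J) : CloseOn f r₀ K p q :=
  fun i hi => (hK hi).elim (fun hI => (h i hI).trans hr) (fun hJ => (h' i hJ).trans hr')

end CloseOn

lemma closeOn_zpow_iff (k : ℤ) :
    CloseOn f r I ((f ^ k) p) ((f ^ k) q) ↔ CloseOn f r ((fun i => i - k) ⁻¹' I) p q := by
  simp only [CloseOn, ← Equiv.Perm.mul_apply, ← zpow_add, mem_preimage]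
  refine ⟨fun h i hi => by simpa using h _ hi, fun h i hi => h _ (by simpa using hi)⟩

lemma Expansive.eq_of_closeOn (h : Expansive f r) (hpq : CloseOn f r univ p q) : p = q := by
  by_contra hne
  obtain ⟨n, hn⟩ := h p q hne
  exact (hpq n (mem_univ n)).not_gt hn

/-- Two brackets of the same pair of points agree by expansiveness. -/
lemma Expansive.canonicalCoords (hr : 0 < r) (h : Expansive f r)
    (hex : ∀ ε > 0, ∃ δ > 0, ∀ x y : Y, dist x y < δ → (Ws f ε x ∩ Wu f ε y).Nonempty) :
    CanonicalCoords f := by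
  refine ⟨r / 2, half_pos hr, fun ε hε hεr => ?_⟩
  obtain ⟨δ, hδ, hbracket⟩ := hex ε hε
  refine ⟨δ, hδ, fun x y hxy => existsUnique_of_exists_of_unique (hbracket x y hxy) ?_⟩
  rintro z z' ⟨hz, hz'⟩ ⟨hw, hw'⟩
  refine h.eq_of_closeOn fun n _ => ?_
  have dist_le {a : Y} (h₁ : dist ((f ^ n) a) ((f ^ n) z) < ε)
      (h₂ : dist ((f ^ n) a) ((f ^ n) z') < ε) : dist ((f ^ n) z) ((f ^ n) z') ≤ r := by
    linarith [dist_triangle_left ((f ^ n) z) ((f ^ n) z') ((f ^ n) a)]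
  rcases Int.eq_nat_or_neg n with ⟨k, rfl | rfl⟩
  · exact dist_le (hz k) (hw k)
  · exact dist_le (hz' k) (hw' k)

lemma continuous_perm_zpow (hf : Continuous f) (hf' : Continuous f.symm) (i : ℤ) :
    Continuous (f ^ i) := by
  cases i with
  | ofNat n => simpa [← Equiv.Perm.iterate_eq_pow] using hf.iterate n
  | negSucc n =>
    rw [zpow_negSucc, ← inv_pow, ← Equiv.Perm.iterate_eq_pow]
    exact hf'.iterate _

end Iterates

section Limits

variable {Y : Type*} [MetricSpace Y] {f : Equiv.Perm Y} {r : ℝ}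

lemma isClosed_setOf_closeOn (hf : ∀ i : ℤ, Continuous (f ^ i)) (r : ℝ) (I : Set ℤ) :
    IsClosed {z : Y × Y | CloseOn f r I z.1 z.2} := by
  simp only [CloseOn, ofPred_forall]
  refine isClosed_biInter fun i _ => isClosed_le ?_ continuous_const
  have := hf i
  fun_prop

lemma CloseOn.of_tendsto (hf : ∀ i : ℤ, Continuous (f ^ i)) {ι : Type*} {l : Filter ι} [l.NeBot]
    {g g' : ι → Y} {p q : Y} (hg : Tendsto g l (𝓝 p)) (hg' : Tendsto g' l (𝓝 q)) {I : Set ℤ}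
    (h : ∀ᶠ x in l, CloseOn f r I (g x) (g' x)) : CloseOn f r I p q :=
  (isClosed_setOf_closeOn hf r I).mem_of_tendsto (hg.prodMk_nhds hg') h

lemma eventually_closeOn_of_tendsto (hf : ∀ i : ℤ, Continuous (f ^ i)) {ι : Type*} {l : Filter ι}
    {g : ι → Y} {p : Y} (hg : Tendsto g l (𝓝 p)) (hr : 0 < r) {I : Set ℤ} (hI : I.Finite) :
    ∀ᶠ x in l, CloseOn f r I p (g x) := by
  refine (eventually_all_finite hI).2 fun i _ => ?_
  have hlim := ((hf i).tendsto p).comp hg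
  exact (Metric.tendsto_nhds.1 hlim r hr).mono fun x hx => (dist_comm _ _).trans_le hx.le

lemma exists_window_closeOn_imp_dist_lt [CompactSpace Y] (hf : ∀ i : ℤ, Continuous (f ^ i))
    (hexp : ∀ p q, CloseOn f r univ p q → p = q) {δ : ℝ} (hδ : 0 < δ) :
    ∃ N : ℕ, ∀ p q, CloseOn f r (Icc (-N) N) p q → dist p q < δ := by
  let V (N : ℕ) : Set (Y × Y) := {z | CloseOn f r (Icc (-N) N) z.1 z.2}
  have hV : Antitone V := fun m n hmn z hz => hz.mono_times (by grind)
  have hclosed (N : ℕ) : IsClosed (V N) := isClosed_setOf_closeOn hf r _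
  have hdiag : ∀ z ∈ ⋂ N, V N, {z : Y × Y | dist z.1 z.2 < δ} ∈ 𝓝 z := by
    rintro ⟨p, q⟩ hz
    obtain rfl : p = q := hexp p q fun i _ => mem_iInter.1 hz i.natAbs i (by grind)
    exact (isOpen_lt continuous_dist continuous_const).mem_nhds (by simpa using hδ)
  obtain ⟨N, hN⟩ := exists_subset_nhds_of_isCompact' hV.directed_ge
    (fun N => (hclosed N).isCompact) hclosed hdiag
  exact ⟨N, fun p q h => hN (show (p, q) ∈ V N from h)⟩

lemma eventually_forall_mem_of_forall_tendsto {ι Z : Type*} [TopologicalSpace Z] [CompactSpace Z]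
    {U : Ultrafilter ι} {s : ι → Set Z} {p : ι → Z → Prop}
    (h : ∀ (g : ι → Z) (z : Z), (∀ᶠ x in U, g x ∈ s x) → Tendsto g U (𝓝 z) →
      ∀ᶠ x in U, p x (g x)) : ∀ᶠ x in U, ∀ z ∈ s x, p x z := by
  by_contra hcon
  rw [← Ultrafilter.eventually_not] at hcon
  simp only [not_forall, exists_prop] at hcon
  obtain ⟨g, hg⟩ := hcon.choice
  obtain ⟨z, -, hz⟩ := isCompact_univ.ultrafilter_le_nhds (U.map g) (by simp)
  obtain ⟨x, hx, hpx⟩ := (hg.and (h g z (hg.mono fun x hx => hx.1) hz)).exists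
  exact hx.2 hpx

end Limits

section Subshifts

variable {A : Type*} {S : Set (ℤ → A)}

lemma shiftE_zpow_apply (k : ℤ) (s : ℤ → A) (i : ℤ) : (shiftE A ^ k) s i = s (i + k) := by
  induction k generalizing i with
  | zero => simp
  | succ n ih =>
    rw [add_comm, zpow_add, zpow_one, Equiv.Perm.mul_apply]
    exact (ih (i + 1)).trans (congrArg s (by ring))
  | pred n ih =>
    rw [sub_eq_neg_add, zpow_add, zpow_neg_one, Equiv.Perm.mul_apply]
    exact (ih (i - 1)).trans (congrArg s (by ring))

lemma ShiftInvariant.zpow_mem (hS : ShiftInvariant S) {s : ℤ → A} (hs : s ∈ S) (k : ℤ) :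
    (shiftE A ^ k) s ∈ S := by
  induction k with
  | zero => simpa using hs
  | succ n ih =>
    rw [add_comm, zpow_add, zpow_one]
    exact hS.1 _ ih
  | pred n ih =>
    rw [sub_eq_neg_add, zpow_add, zpow_neg_one]
    exact hS.2 _ ih

lemma IsSFT.exists_splice (hS : IsSFT S) :
    ∃ L₀ : ℕ, ∀ L : ℕ, L₀ ≤ L → ∀ s ∈ S, ∀ t ∈ S, ∀ k : ℤ, EqOn s t (Icc (k - L) (k + L)) →
      ∃ u ∈ S, EqOn u s (Iic (k + L)) ∧ EqOn u t (Ici (k - L)) := by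
  obtain ⟨Fw, hFw, rfl⟩ := hS
  obtain ⟨L₀, hL₀⟩ := (hFw.image Sigma.fst).bddAbove
  refine ⟨L₀, fun L hL s hs t ht k hst => ?_⟩
  have eqOn_left : EqOn (fun i => if i ≤ k then s i else t i) s (Iic (k + L)) := by
    intro i hi
    have := @hst i
    grind
  have eqOn_right : EqOn (fun i => if i ≤ k then s i else t i) t (Ici (k - L)) := by
    intro i hi
    have := @hst i
    grind
  refine ⟨_, fun v hv ⟨i, hi⟩ => ?_, eqOn_left, eqOn_right⟩
  have hlength : v.1 ≤ L := (hL₀ (mem_image_of_mem _ hv)).trans hL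
  rcases le_or_gt i k with hik | hik
  · exact hs v hv ⟨i, fun j => (eqOn_left (by grind)).symm.trans (hi j)⟩
  · exact ht v hv ⟨i, fun j => (eqOn_right (by grind)).symm.trans (hi j)⟩

variable [TopologicalSpace A] {Y : Type*} [MetricSpace Y] {f : Equiv.Perm Y} {φ : (ℤ → A) → Y}

lemma IsSubshiftFactorMap.map_zpow (hφ : IsSubshiftFactorMap S f φ) (hS : ShiftInvariant S)
    {s : ℤ → A} (hs : s ∈ S) (k : ℤ) : φ ((shiftE A ^ k) s) = (f ^ k) (φ s) := by
  induction k with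
  | zero => simp
  | succ n ih =>
    rw [add_comm, zpow_add, zpow_one, Equiv.Perm.mul_apply, hφ.2.2 _ (hS.zpow_mem hs _), ih,
      zpow_add, zpow_one, Equiv.Perm.mul_apply]
  | pred n ih =>
    apply f.injective
    rw [← hφ.2.2 _ (hS.zpow_mem hs _), ← Equiv.Perm.mul_apply, ← zpow_one_add,
      ← Equiv.Perm.mul_apply f, ← zpow_one_add, add_sub_cancel, ih]

lemma tendsto_of_eventually_apply_eq {ι : Type*} {l : Filter ι} {g : ι → ℤ → A} {s : ℤ → A}
    (hg : ∀ i, ∀ᶠ x in l, g x i = s i) : Tendsto g l (𝓝 s) :=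
  tendsto_pi_nhds.2 fun i => tendsto_const_nhds.congr' ((hg i).mono fun _ hx => hx.symm)

lemma IsSubshiftFactorMap.compactSpace (hφ : IsSubshiftFactorMap S f φ) (hS : IsCompact S) :
    CompactSpace Y :=
  ⟨hφ.2.1 ▸ hS.image_of_continuousOn hφ.1⟩

variable [DiscreteTopology A]

lemma isOpen_setOf_eqOn (s : ℤ → A) {I : Set ℤ} (hI : I.Finite) : IsOpen {t | EqOn t s I} := by
  simp only [EqOn, ofPred_forall]
  exact hI.isOpen_biInter fun i _ =>
    (isOpen_discrete {s i}).preimage (continuous_apply (A := fun _ => A) i)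

lemma eventually_eqOn_of_tendsto {ι : Type*} {l : Filter ι} {g : ι → ℤ → A} {s : ℤ → A}
    (hg : Tendsto g l (𝓝 s)) {I : Set ℤ} (hI : I.Finite) : ∀ᶠ x in l, EqOn (g x) s I :=
  hg.eventually ((isOpen_setOf_eqOn s hI).mem_nhds (eqOn_refl s I))

lemma isClosed_setOf_eqOn (I : Set ℤ) : IsClosed {z : (ℤ → A) × (ℤ → A) | EqOn z.1 z.2 I} := by
  simp only [EqOn, ofPred_forall]
  exact isClosed_biInter fun i _ => isClosed_eq (by fun_prop) (by fun_prop)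

lemma IsSFT.isClosed (hS : IsSFT S) : IsClosed S := by
  obtain ⟨Fw, -, rfl⟩ := hS
  have isOpen_occursIn (w : (k : ℕ) × (Fin k → A)) : IsOpen {x | OccursIn w.2 x} := by
    simp only [OccursIn, ofPred_exists, ofPred_forall]
    exact isOpen_iUnion fun i => isOpen_iInter_of_finite fun j =>
      (isOpen_discrete {w.2 j}).preimage (continuous_apply (A := fun _ => A) (i + (j : ℤ)))
  simp only [ofPred_forall]
  exact isClosed_biInter fun w _ => (isOpen_occursIn w).isClosed_compl

lemma exists_window_eqOn_imp_dist_lt (hS : IsCompact S) (hφ : ContinuousOn φ S) {δ : ℝ}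
    (hδ : 0 < δ) : ∃ N : ℕ, ∀ s ∈ S, ∀ t ∈ S, EqOn s t (Icc (-N) N) → dist (φ s) (φ t) < δ := by
  have := isCompact_iff_compactSpace.1 hS
  let V (N : ℕ) : Set (S × S) := {z | EqOn z.1.1 z.2.1 (Icc (-N) N)}
  have hV : Antitone V := fun m n hmn z hz => EqOn.mono (by grind) hz
  have hclosed (N : ℕ) : IsClosed (V N) := (isClosed_setOf_eqOn _).preimage
    (continuous_subtype_val.prodMap continuous_subtype_val)
  have hdiag : ∀ z ∈ ⋂ N, V N, {z : S × S | dist (φ z.1) (φ z.2) < δ} ∈ 𝓝 z := by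
    rintro ⟨s, t⟩ hz
    obtain rfl : s = t := Subtype.ext <| funext fun i =>
      mem_iInter.1 hz i.natAbs (show i ∈ _ by grind)
    have hcont := hφ.domRestrict
    have hdist : Continuous fun z : S × S => dist (φ z.1) (φ z.2) :=
      (hcont.comp continuous_fst).dist (hcont.comp continuous_snd)
    exact (isOpen_lt hdist continuous_const).mem_nhds (by simpa using hδ)
  obtain ⟨N, hN⟩ := exists_subset_nhds_of_isCompact' hV.directed_ge
    (fun N => (hclosed N).isCompact) hclosed hdiag
  exact ⟨N, fun s hs t ht h => hN (show (⟨s, hs⟩, ⟨t, ht⟩) ∈ V N from h)⟩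

end Subshifts

section SymbolicCovers

variable {A Y : Type*} [TopologicalSpace A] [MetricSpace Y] {f : Equiv.Perm Y}

/-- A presentation of `(Y, f)` as a factor of a compact subshift, with the constants of the
construction fixed: `100 * scale` is an expansive constant, orbits that are `50 * scale`-close
during `horizon` steps in both directions are `scale / 4`-close, and `memory` is a window length
long enough both for splicing sequences of the subshift and for determining their image up to
`scale`. -/
structure SymbolicCover (A : Type*) [TopologicalSpace A] (f : Equiv.Perm Y) where
  shift : Set (ℤ → A)
  proj : (ℤ → A) → Y
  scale : ℝ
  horizon : ℕ
  memory : ℕ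
  continuous_zpow : ∀ i : ℤ, Continuous (f ^ i)
  isCompact_shift : IsCompact shift
  shiftInvariant : ShiftInvariant shift
  isSubshiftFactorMap : IsSubshiftFactorMap shift f proj
  scale_pos : 0 < scale
  expansive : Expansive f (100 * scale)
  dist_le_of_closeOn : ∀ p q, CloseOn f (50 * scale) (Icc (-horizon) horizon) p q →
    dist p q ≤ scale / 4
  dist_le_of_eqOn : ∀ s ∈ shift, ∀ t ∈ shift, EqOn s t (Icc (-memory) memory) →
    dist (proj s) (proj t) ≤ scale
  exists_splice : ∀ s ∈ shift, ∀ t ∈ shift, ∀ k : ℤ, EqOn s t (Icc (k - memory) (k + memory)) →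
    ∃ u ∈ shift, EqOn u s (Iic (k + memory)) ∧ EqOn u t (Ici (k - memory))

theorem FinitelyPresented.compactSpace (h : FinitelyPresented f) : CompactSpace Y := by
  obtain ⟨-, -, -, N, S, hS, -, -, φ, hφ⟩ := h
  exact hφ.compactSpace hS.isClosed.isCompact

theorem FinitelyPresented.exists_symbolicCover [CompactSpace Y] (h : FinitelyPresented f) :
    ∃ N : ℕ, Nonempty (SymbolicCover (Fin N) f) := by
  obtain ⟨hf, hf', ⟨c, hc, hexp⟩, N, S, hS, hshift, -, φ, hφ⟩ := h
  have hzpow := continuous_perm_zpow hf hf'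
  have hcompact : IsCompact S := hS.isClosed.isCompact
  obtain ⟨M, hM⟩ := exists_window_closeOn_imp_dist_lt hzpow (r := 50 * (c / 100))
    (fun p q hpq => hexp.eq_of_closeOn (hpq.mono_radius (by linarith)))
    (δ := c / 100 / 4) (by positivity)
  obtain ⟨L₁, hL₁⟩ := exists_window_eqOn_imp_dist_lt hcompact hφ.1 (δ := c / 100) (by positivity)
  obtain ⟨L₂, hL₂⟩ := hS.exists_splice
  exact ⟨N, ⟨{
    shift := S
    proj := φ
    scale := c / 100
    horizon := M
    memory := L₁ + L₂
    continuous_zpow := hzpow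
    isCompact_shift := hcompact
    shiftInvariant := hshift
    isSubshiftFactorMap := hφ
    scale_pos := by positivity
    expansive := by rwa [mul_div_cancel₀ c (by norm_num)]
    dist_le_of_closeOn := fun p q hpq => (hM p q hpq).le
    dist_le_of_eqOn := fun s hs t ht hst => (hL₁ s hs t ht (hst.mono (by grind))).le
    exists_splice := hL₂ (L₁ + L₂) (Nat.le_add_left L₂ L₁) }⟩⟩

namespace SymbolicCover

variable (P : SymbolicCover A f) {p q w : Y} {r r' : ℝ} {I J K : Set ℤ} {s t : ℤ → A}

lemma closeOn_scale_div_four (h : CloseOn f r I p q) (hr : r ≤ 50 * P.scale)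
    (hJ : ∀ k ∈ J, Icc (k - P.horizon) (k + P.horizon) ⊆ I) : CloseOn f (P.scale / 4) J p q :=
  fun k hk => P.dist_le_of_closeOn _ _ <| (closeOn_zpow_iff k).2 <|
    h.mono hr fun i hi => hJ k hk (by grind)

lemma exists_closeOn_past_trans {m n : ℤ} (h : CloseOn f P.scale (Iic m) p q)
    (h' : CloseOn f P.scale (Iic n) q w) : ∃ k : ℤ, CloseOn f P.scale (Iic k) p w := by
  have he := P.scale_pos
  have hsmall : CloseOn f (P.scale / 4) (Iic (min m n - P.horizon)) p w :=
    P.closeOn_scale_div_four (h.trans h') (by linarith) (by grind)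
  exact ⟨_, hsmall.mono_radius (by linarith)⟩

lemma eq_of_closeOn (h : CloseOn f r I p q) (h' : CloseOn f r' J p q) (hr : r ≤ 100 * P.scale)
    (hr' : r' ≤ 100 * P.scale) (hIJ : univ ⊆ I ∪ J) : p = q :=
  P.expansive.eq_of_closeOn (h.glue h' hr hr' hIJ)

lemma exists_window_dist_lt [CompactSpace Y] {δ : ℝ} (hδ : 0 < δ) :
    ∃ N : ℕ, ∀ p q, CloseOn f P.scale (Icc (-N) N) p q → dist p q < δ :=
  exists_window_closeOn_imp_dist_lt P.continuous_zpow
    (fun p q h => P.expansive.eq_of_closeOn (h.mono_radius (by linarith [P.scale_pos]))) hδ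

lemma proj_zpow (hs : s ∈ P.shift) (k : ℤ) : P.proj ((shiftE A ^ k) s) = (f ^ k) (P.proj s) :=
  P.isSubshiftFactorMap.map_zpow P.shiftInvariant hs k

lemma exists_proj_eq (y : Y) : ∃ s ∈ P.shift, P.proj s = y :=
  P.isSubshiftFactorMap.2.1.symm.subset (mem_univ y)

lemma closeOn_of_eqOn (hs : s ∈ P.shift) (ht : t ∈ P.shift) (hst : EqOn s t J)
    (hJ : ∀ k ∈ I, Icc (k - P.memory) (k + P.memory) ⊆ J) :
    CloseOn f P.scale I (P.proj s) (P.proj t) := by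
  intro k hk
  rw [← P.proj_zpow hs, ← P.proj_zpow ht]
  refine P.dist_le_of_eqOn _ (P.shiftInvariant.zpow_mem hs k) _ (P.shiftInvariant.zpow_mem ht k)
    fun i hi => ?_
  rw [shiftE_zpow_apply, shiftE_zpow_apply]
  exact hst (hJ k hk (by grind))

lemma tendsto_proj {ι : Type*} {l : Filter ι} {σ : ι → ℤ → A} (hσ : Tendsto σ l (𝓝 s))
    (hs : s ∈ P.shift) (hmem : ∀ᶠ x in l, σ x ∈ P.shift) :
    Tendsto (fun x => P.proj (σ x)) l (𝓝 (P.proj s)) :=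
  (P.isSubshiftFactorMap.1 s hs).tendsto.comp (tendsto_nhdsWithin_iff.2 ⟨hσ, hmem⟩)

lemma exists_tendsto_lift {ι : Type*} {U : Ultrafilter ι} {σ : ι → ℤ → A} {g : ι → Y} {z : Y}
    (hσ : ∀ᶠ x in U, σ x ∈ P.shift ∧ P.proj (σ x) = g x) (hg : Tendsto g U (𝓝 z)) :
    ∃ s ∈ P.shift, P.proj s = z ∧ Tendsto σ U (𝓝 s) := by
  have hmem : ∀ᶠ x in U, σ x ∈ P.shift := hσ.mono fun x hx => hx.1
  obtain ⟨s, hs, hlim⟩ := P.isCompact_shift.ultrafilter_le_nhds' (U.map σ) hmem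
  have hproj : Tendsto g U (𝓝 (P.proj s)) :=
    (P.tendsto_proj hlim hs hmem).congr' (hσ.mono fun x hx => hx.2)
  exact ⟨s, hs, tendsto_nhds_unique hproj hg, hlim⟩

/-- A lift `s` is admissible for a set `K` when `K` contains the image of the unstable set of `s`
in the subshift. -/
def Admissible (K : Set Y) (s : ℤ → A) : Prop :=
  s ∈ P.shift ∧ ∀ t ∈ P.shift, ∀ m : ℤ, EqOn t s (Iic m) → P.proj t ∈ K

variable {P}

lemma Admissible.exists_bracket {K : Set Y} (hs : P.Admissible K s) (ht : t ∈ P.shift) {k : ℤ}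
    (hst : EqOn s t (Icc (k - P.memory) (k + P.memory))) :
    ∃ z ∈ K, CloseOn f P.scale (Iic k) z (P.proj s) ∧ CloseOn f P.scale (Ici k) z (P.proj t) := by
  obtain ⟨u, hu, hus, hut⟩ := P.exists_splice s hs.1 t ht k hst
  exact ⟨P.proj u, hs.2 u hu _ hus, P.closeOn_of_eqOn hu hs.1 hus (by grind),
    P.closeOn_of_eqOn hu ht hut (by grind)⟩

lemma Admissible.image_zpow {K : Set Y} (hs : P.Admissible K s) (k : ℤ) :
    P.Admissible ((f ^ k) '' K) ((shiftE A ^ k) s) := by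
  refine ⟨P.shiftInvariant.zpow_mem hs.1 k, fun t ht m htm => ?_⟩
  have hmem := hs.2 _ (P.shiftInvariant.zpow_mem ht (-k)) (m + k) fun i hi => by
    rw [shiftE_zpow_apply, htm (show i + -k ≤ m by grind), shiftE_zpow_apply, neg_add_cancel_right]
  rw [P.proj_zpow ht, zpow_neg] at hmem
  exact ⟨_, hmem, (f ^ k).apply_symm_apply _⟩

end SymbolicCover

end SymbolicCovers

section MarkedLeaves

variable {A Y : Type*} [TopologicalSpace A] [MetricSpace Y] {f : Equiv.Perm Y}

/-- A point of the extension: a point of `Y` together with a subset of its unstable set that is a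
union of images of unstable sets of the subshift. By expansiveness, lying in the unstable set
amounts to being `scale`-close up to some time. -/
@[ext]
structure MarkedLeaf (P : SymbolicCover A f) where
  point : Y
  leaf : Set Y
  point_mem : point ∈ leaf
  asymptotic : ∀ z ∈ leaf, ∃ n : ℤ, CloseOn f P.scale (Iic n) z point
  exists_lift : ∀ z ∈ leaf, ∃ s, P.Admissible leaf s ∧ P.proj s = z

namespace MarkedLeaf

variable {P : SymbolicCover A f} {r r' : ℝ} {m n k : ℤ} {z : Y}

/-- The part of the leaf that stays within `r` of the marked point up to time `n`. -/
def plaque (x : MarkedLeaf P) (r : ℝ) (n : ℤ) : Set Y :=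
  {z ∈ x.leaf | CloseOn f r (Iic n) z x.point}

lemma point_mem_plaque (x : MarkedLeaf P) (hr : 0 ≤ r) (n : ℤ) : x.point ∈ x.plaque r n :=
  ⟨x.point_mem, CloseOn.refl f hr _ _⟩

lemma plaque_mono (x : MarkedLeaf P) (hr : r ≤ r') (hn : m ≤ n) :
    x.plaque r n ⊆ x.plaque r' m :=
  fun _ hz => ⟨hz.1, hz.2.mono hr (Iic_subset_Iic.2 hn)⟩

lemma mem_plaque_scale_div_four {x : MarkedLeaf P} (hz : z ∈ x.plaque r n)
    (hr : r ≤ 50 * P.scale) : z ∈ x.plaque (P.scale / 4) (n - P.horizon) :=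
  ⟨hz.1, P.closeOn_scale_div_four hz.2 hr (by grind)⟩

lemma exists_mem_plaque {x : MarkedLeaf P} (hz : z ∈ x.leaf) :
    ∃ n : ℤ, z ∈ x.plaque P.scale n :=
  (x.asymptotic z hz).imp fun _ hn => ⟨hz, hn⟩

lemma plaque_subset_plaque_of_leaf_eq {x x' : MarkedLeaf P} (hleaf : x.leaf = x'.leaf)
    (h : CloseOn f r' (Iic n) x.point x'.point) : x.plaque r n ⊆ x'.plaque (r + r') n :=
  fun _ hz => ⟨hleaf ▸ hz.1, (hz.2.trans h).mono_times (inter_self _).superset⟩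

/-- A limit of points of a plaque is recovered by splicing the past of a lift of a nearby point of
the plaque to the future of a lift of the limit; splicing does not leave the leaf. -/
lemma isClosed_plaque [DiscreteTopology A] (x : MarkedLeaf P) (hr : r ≤ 10 * P.scale) (n : ℤ) :
    IsClosed (x.plaque r n) := by
  refine isClosed_iff_ultrafilter.2 fun z U hU hmem => ?_
  have hclose : ∀ᶠ w in U, CloseOn f r (Iic n) w x.point := mem_of_superset hmem fun w hw => hw.2
  obtain ⟨σ, hσ⟩ := (show ∀ᶠ w in U, ∃ s, P.Admissible x.leaf s ∧ P.proj s = w from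
    mem_of_superset hmem fun w hw => x.exists_lift w hw.1).choice
  obtain ⟨s, hs, rfl, hlim⟩ :=
    P.exists_tendsto_lift (g := id) (hσ.mono fun w hw => ⟨hw.1.1, hw.2⟩) hU
  have hsx : CloseOn f r (Iic n) (P.proj s) x.point :=
    CloseOn.of_tendsto P.continuous_zpow hU tendsto_const_nhds hclose
  obtain ⟨w, hw, ⟨hσw, hσw'⟩, hst⟩ := (hclose.and (hσ.and
    (eventually_eqOn_of_tendsto hlim (finite_Icc (n - P.memory) (n + P.memory))))).exists
  obtain ⟨v, hv, hpast, hfuture⟩ := hσw.exists_bracket hs hst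
  rw [hσw'] at hpast
  have hvs : v = P.proj s := P.eq_of_closeOn ((hpast.trans hw).trans hsx.symm) hfuture
    (by linarith [P.scale_pos]) (by linarith [P.scale_pos]) (by grind)
  exact ⟨hvs ▸ hv, hsx⟩

/-- Moves the marked point within its leaf. -/
def rebase (x : MarkedLeaf P) (z : Y) (hz : z ∈ x.leaf) : MarkedLeaf P where
  point := z
  leaf := x.leaf
  point_mem := hz
  asymptotic v hv := by
    obtain ⟨_, hn⟩ := x.asymptotic v hv
    obtain ⟨_, hm⟩ := x.asymptotic z hz
    exact P.exists_closeOn_past_trans hn hm.symm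
  exists_lift := x.exists_lift

/-- The marked leaf of `y` whose leaf is the whole unstable set of `y`. -/
def maximal (P : SymbolicCover A f) (y : Y) : MarkedLeaf P where
  point := y
  leaf := {z | ∃ n : ℤ, CloseOn f P.scale (Iic n) z y}
  point_mem := ⟨0, CloseOn.refl f P.scale_pos.le _ y⟩
  asymptotic _ hz := hz
  exists_lift := by
    rintro z ⟨_, hn⟩
    obtain ⟨s, hs, rfl⟩ := P.exists_proj_eq z
    refine ⟨s, ⟨hs, fun t ht m hts => ?_⟩, rfl⟩
    have hm : CloseOn f P.scale (Iic (m - P.memory)) (P.proj t) (P.proj s) :=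
      P.closeOn_of_eqOn ht hs hts (by grind)
    exact P.exists_closeOn_past_trans hm hn

/-- The `k`-th iterate of the homeomorphism of the extension. -/
def map (k : ℤ) (x : MarkedLeaf P) : MarkedLeaf P where
  point := (f ^ k) x.point
  leaf := (f ^ k) '' x.leaf
  point_mem := mem_image_of_mem _ x.point_mem
  asymptotic := by
    rintro _ ⟨z, hz, rfl⟩
    obtain ⟨n, hn⟩ := x.asymptotic z hz
    exact ⟨n - k, (closeOn_zpow_iff k).2 (hn.mono_times (by grind))⟩
  exists_lift := by
    rintro _ ⟨z, hz, rfl⟩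
    obtain ⟨s, hs, rfl⟩ := x.exists_lift z hz
    exact ⟨_, hs.image_zpow k, P.proj_zpow hs.1 k⟩

lemma map_map (k m : ℤ) (x : MarkedLeaf P) : (x.map m).map k = x.map (k + m) := by
  ext1 <;> simp [map, zpow_add, image_image]

lemma map_zero (x : MarkedLeaf P) : x.map 0 = x := by
  ext <;> simp [map]

/-- The homeomorphism of the extension. -/
@[simps apply]
def extend (P : SymbolicCover A f) : Equiv.Perm (MarkedLeaf P) where
  toFun := map 1
  invFun := map (-1)
  left_inv x := by rw [map_map, neg_add_cancel, map_zero]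
  right_inv x := by rw [map_map, add_neg_cancel, map_zero]

lemma extend_zpow_apply (k : ℤ) (x : MarkedLeaf P) : (extend P ^ k) x = x.map k := by
  induction k with
  | zero => rw [zpow_zero, Equiv.Perm.one_apply, map_zero]
  | succ n ih => rw [add_comm, zpow_one_add, Equiv.Perm.mul_apply, ih, extend_apply, map_map]
  | pred n ih =>
    rw [sub_eq_neg_add, zpow_add, zpow_neg_one, Equiv.Perm.mul_apply, ih, ← map_map]
    rfl

lemma plaque_map (x : MarkedLeaf P) (k : ℤ) (r : ℝ) (n : ℤ) :
    (x.map k).plaque r n = (f ^ k) '' x.plaque r (n + k) := by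
  ext z
  obtain ⟨z, rfl⟩ := (f ^ k).surjective z
  simp [plaque, map, closeOn_zpow_iff]

end MarkedLeaf

end MarkedLeaves

section Uniformity

variable {A Y : Type*} [TopologicalSpace A] [MetricSpace Y] {f : Equiv.Perm Y}

namespace MarkedLeaf

variable {P : SymbolicCover A f} {x x' x'' : MarkedLeaf P} {a b a' b' n k : ℤ} {z : Y}

/-- Every point of a small plaque of `x` is shadowed during the times from `a` to `b` by a point of
a slightly larger plaque of `x'`. -/
def HalfNear (a b : ℤ) (x x' : MarkedLeaf P) : Prop :=
  ∀ z ∈ x.plaque P.scale a, ∃ w ∈ x'.plaque (3 * P.scale) a, CloseOn f P.scale (Icc a b) z w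

/-- Closeness of marked leaves during the times from `a` to `b`: the marked points are close and
the plaques shadow each other. The relations `Near (-N) N` generate the uniformity. -/
structure Near (a b : ℤ) (x x' : MarkedLeaf P) : Prop where
  closeOn : CloseOn f P.scale (Icc a b) x.point x'.point
  halfNear : HalfNear a b x x'
  halfNear_symm : HalfNear a b x' x

namespace Near

lemma refl (a b : ℤ) (x : MarkedLeaf P) : Near a b x x := by
  have hself : HalfNear a b x x := fun z hz =>
    ⟨z, x.plaque_mono (by linarith [P.scale_pos]) le_rfl hz, CloseOn.refl f P.scale_pos.le _ z⟩
  exact ⟨CloseOn.refl f P.scale_pos.le _ _, hself, hself⟩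

lemma symm (h : Near a b x x') : Near a b x' x :=
  ⟨h.closeOn.symm, h.halfNear_symm, h.halfNear⟩

lemma exists_mem_plaque (h : Near a b x x') (han : a ≤ n) (hnb : n ≤ b)
    (hz : z ∈ x.plaque P.scale n) :
    ∃ z' ∈ x'.plaque (3 * P.scale) n, CloseOn f P.scale (Icc a b) z z' := by
  obtain ⟨z', hz', hzz'⟩ := h.halfNear z (x.plaque_mono le_rfl han hz)
  have hpoint : CloseOn f (3 * P.scale) (Icc a n) z' x'.point :=
    ((hzz'.symm.trans hz.2).trans h.closeOn).mono (by linarith) (by grind)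
  exact ⟨z', ⟨hz'.1, hz'.2.glue hpoint le_rfl le_rfl (by grind)⟩, hzz'⟩

lemma mono (h : Near a b x x') (ha : a ≤ a') (hab : a' ≤ b) (hb : b' ≤ b) :
    Near a' b' x x' := by
  have halfNear {y y' : MarkedLeaf P} (hy : Near a b y y') : HalfNear a' b' y y' := by
    intro z hz
    obtain ⟨z', hz', hzz'⟩ := hy.exists_mem_plaque ha hab hz
    exact ⟨z', hz', hzz'.mono_times (Icc_subset_Icc ha hb)⟩
  exact ⟨h.closeOn.mono_times (Icc_subset_Icc ha hb), halfNear h, halfNear h.symm⟩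

lemma closeOn_trans
    (h : Near (a - 2 * P.horizon) (b + 2 * P.horizon) x x')
    (h' : Near (a - 2 * P.horizon) (b + 2 * P.horizon) x' x'') :
    CloseOn f (P.scale / 2) (Icc (a - P.horizon) (b + P.horizon)) x.point x''.point := by
  have hcontract {p q : Y}
      (hpq : CloseOn f P.scale (Icc (a - 2 * P.horizon) (b + 2 * P.horizon)) p q) :
      CloseOn f (P.scale / 4) (Icc (a - P.horizon) (b + P.horizon)) p q :=
    P.closeOn_scale_div_four hpq (by linarith [P.scale_pos]) (by grind)
  exact ((hcontract h.closeOn).trans (hcontract h'.closeOn)).mono (by linarith) (by grind)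

lemma halfNear_trans (hab : a ≤ b) (h : Near (a - 2 * P.horizon) (b + 2 * P.horizon) x x')
    (h' : Near (a - 2 * P.horizon) (b + 2 * P.horizon) x' x'') : HalfNear a b x x'' := by
  intro z hz
  have he := P.scale_pos
  obtain ⟨z', hz', hzz'⟩ := h.exists_mem_plaque (by grind) (by grind) hz
  have hz'small : z' ∈ x'.plaque P.scale (a - P.horizon) :=
    x'.plaque_mono (by linarith) le_rfl (mem_plaque_scale_div_four hz' (by linarith))
  obtain ⟨z'', hz'', hz'z''⟩ := h'.exists_mem_plaque (by grind) (by grind) hz'small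
  have hzz'' : CloseOn f (P.scale / 4) (Icc (a - P.horizon) (b + P.horizon)) z z'' :=
    P.closeOn_scale_div_four (hzz'.trans hz'z'') (by linarith) (by grind)
  have hpoint : CloseOn f (3 * P.scale) (Icc (a - P.horizon) a) z'' x''.point :=
    ((hzz''.symm.trans hz.2).trans (closeOn_trans h h')).mono (by linarith) (by grind)
  exact ⟨z'', ⟨hz''.1, hz''.2.glue hpoint le_rfl le_rfl (by grind)⟩,
    hzz''.mono (by linarith) (by grind)⟩

lemma trans (hab : a ≤ b) (h : Near (a - 2 * P.horizon) (b + 2 * P.horizon) x x')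
    (h' : Near (a - 2 * P.horizon) (b + 2 * P.horizon) x' x'') : Near a b x x'' :=
  ⟨(closeOn_trans h h').mono (by linarith [P.scale_pos]) (by grind), halfNear_trans hab h h',
    halfNear_trans hab h'.symm h.symm⟩

end Near

lemma halfNear_map_iff :
    HalfNear a b (x.map k) (x'.map k) ↔ HalfNear (a + k) (b + k) x x' := by
  simp only [HalfNear, plaque_map, forall_mem_image, exists_mem_image, closeOn_zpow_iff,
    preimage_sub_const_Icc]

lemma near_map_iff : Near a b (x.map k) (x'.map k) ↔ Near (a + k) (b + k) x x' := by
  have hpoint : CloseOn f P.scale (Icc a b) (x.map k).point (x'.map k).point ↔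
      CloseOn f P.scale (Icc (a + k) (b + k)) x.point x'.point := by
    simp [map, closeOn_zpow_iff]
  exact ⟨fun h => ⟨hpoint.1 h.1, halfNear_map_iff.1 h.2, halfNear_map_iff.1 h.3⟩,
    fun h => ⟨hpoint.2 h.1, halfNear_map_iff.2 h.2, halfNear_map_iff.2 h.3⟩⟩

instance : UniformSpace (MarkedLeaf P) :=
  UniformSpace.ofCore <| UniformSpace.Core.mkOfBasis
    { sets := range fun N : ℕ => {z : MarkedLeaf P × MarkedLeaf P | Near (-N) N z.1 z.2}
      nonempty := range_nonempty _
      inter_sets := by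
        rintro _ _ ⟨M, rfl⟩ ⟨N, rfl⟩
        exact ⟨_, ⟨max M N, rfl⟩, fun z hz => ⟨hz.mono (by grind) (by grind) (by grind),
          hz.mono (by grind) (by grind) (by grind)⟩⟩ }
    (by
      rintro _ ⟨N, rfl⟩ x
      exact Near.refl _ _ x)
    (by
      rintro _ ⟨N, rfl⟩
      exact ⟨_, ⟨N, rfl⟩, fun z hz => hz.symm⟩)
    (by
      rintro _ ⟨N, rfl⟩
      refine ⟨_, ⟨N + 2 * P.horizon, rfl⟩, ?_⟩
      rintro ⟨x, x''⟩ ⟨x', h, h'⟩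
      exact Near.trans (by grind) (h.mono (by grind) (by grind) (by grind))
        (h'.mono (by grind) (by grind) (by grind)))

lemma hasBasis_uniformity : (uniformity (MarkedLeaf P)).HasBasis (fun _ : ℕ => True)
    fun N => {z | Near (-N) N z.1 z.2} := by
  refine ⟨fun s => ⟨?_, ?_⟩⟩
  · rintro ⟨_, ⟨N, rfl⟩, hN⟩
    exact ⟨N, trivial, hN⟩
  · rintro ⟨N, -, hN⟩
    exact ⟨_, ⟨N, rfl⟩, hN⟩

instance : (uniformity (MarkedLeaf P)).IsCountablyGenerated :=
  hasBasis_uniformity.isCountablyGenerated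

lemma le_nhds_iff {l : Filter (MarkedLeaf P)} :
    l ≤ 𝓝 x ↔ ∀ N : ℕ, ∀ᶠ x' in l, Near (-N) N x x' :=
  (nhds_basis_uniformity' hasBasis_uniformity).ge_iff.trans
    ⟨fun h N => h N trivial, fun h N _ => h N⟩

lemma leaf_subset_leaf_of_forall_near [DiscreteTopology A] [CompactSpace Y]
    (h : ∀ N : ℕ, Near (-N) N x x') : x.leaf ⊆ x'.leaf := by
  intro z hz
  obtain ⟨n, hn⟩ := MarkedLeaf.exists_mem_plaque hz
  have hclosed : IsClosed (x'.plaque (3 * P.scale) n) :=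
    isClosed_plaque x' (by linarith [P.scale_pos]) n
  suffices z ∈ closure (x'.plaque (3 * P.scale) n) from (hclosed.closure_eq ▸ this).1
  refine Metric.mem_closure_iff.2 fun δ hδ => ?_
  obtain ⟨N, hN⟩ := P.exists_window_dist_lt hδ
  obtain ⟨z', hz', hzz'⟩ := (h (N + n.natAbs)).exists_mem_plaque (by grind) (by grind) hn
  exact ⟨z', hz', hN z z' (hzz'.mono_times (by grind))⟩

instance [DiscreteTopology A] [CompactSpace Y] : T0Space (MarkedLeaf P) := by
  refine t0Space_iff_uniformity.2 fun x x' hx => ?_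
  have hnear (N : ℕ) : Near (-N) N x x' := hx _ (hasBasis_uniformity.mem_of_mem trivial)
  have hpoint : CloseOn f P.scale univ x.point x'.point := fun i _ =>
    (hnear i.natAbs).closeOn i (by grind)
  exact MarkedLeaf.ext
    (P.expansive.eq_of_closeOn (hpoint.mono_radius (by linarith [P.scale_pos])))
    ((leaf_subset_leaf_of_forall_near hnear).antisymm
      (leaf_subset_leaf_of_forall_near fun N => (hnear N).symm))

lemma continuous_point [CompactSpace Y] :
    Continuous (point : MarkedLeaf P → Y) := by
  refine UniformContinuous.continuous
    ((hasBasis_uniformity.uniformContinuous_iff Metric.uniformity_basis_dist).2 fun δ hδ => ?_)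
  obtain ⟨N, hN⟩ := P.exists_window_dist_lt hδ
  exact ⟨N, trivial, fun x x' h => hN _ _ h.closeOn⟩

lemma uniformContinuous_map (k : ℤ) : UniformContinuous (map k : MarkedLeaf P → MarkedLeaf P) := by
  refine (hasBasis_uniformity.uniformContinuous_iff hasBasis_uniformity).2 fun N _ =>
    ⟨N + k.natAbs, trivial, fun x x' h => near_map_iff.2 ?_⟩
  exact Near.mono h (by grind) (by grind) (by grind)

end MarkedLeaf

end Uniformity

section Compactness

variable {A Y : Type*} [TopologicalSpace A] [MetricSpace Y] {f : Equiv.Perm Y}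

namespace MarkedLeaf

variable {P : SymbolicCover A f} {U : Ultrafilter (MarkedLeaf P)} {r : ℝ} {n : ℤ} {y z : Y}
  {g : MarkedLeaf P → Y} {σ : MarkedLeaf P → ℤ → A} {s : ℤ → A}

/-- The leaf of the limit of an ultrafilter of marked leaves: the limits of all selections of
points of plaques of a fixed size. -/
def limitLeaf (U : Ultrafilter (MarkedLeaf P)) : Set Y :=
  {z | ∃ (n : ℤ) (g : MarkedLeaf P → Y),
    (∀ᶠ x in U, g x ∈ x.plaque P.scale n) ∧ Tendsto g U (𝓝 z)}

lemma mem_limitLeaf (hr : r ≤ 50 * P.scale) (hg : ∀ᶠ x in U, g x ∈ x.plaque r n)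
    (hz : Tendsto g U (𝓝 z)) : z ∈ limitLeaf U :=
  ⟨n - P.horizon, g, hg.mono fun x hx =>
    x.plaque_mono (by linarith [P.scale_pos]) le_rfl (mem_plaque_scale_div_four hx hr), hz⟩

variable [DiscreteTopology A]

/-- A sequence with the past of `s` is a limit of sequences with the pasts of the `σ x`. -/
lemma admissible_limitLeaf (hr : r ≤ 49 * P.scale)
    (hσ : ∀ᶠ x in U, P.Admissible x.leaf (σ x) ∧ P.proj (σ x) ∈ x.plaque r n) (hs : s ∈ P.shift)
    (hlim : Tendsto σ U (𝓝 s)) : P.Admissible (limitLeaf U) s := by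
  refine ⟨hs, fun t ht m hts => ?_⟩
  have hsplice : ∀ᶠ x in U, ∃ u ∈ P.shift,
      EqOn u (σ x) (Iic m) ∧ EqOn u t (Ici (m - P.memory - P.memory)) := by
    filter_upwards [hσ, eventually_eqOn_of_tendsto hlim
      (finite_Icc (m - P.memory - P.memory) (m - P.memory + P.memory))] with x hx hxs
    obtain ⟨u, hu, hpast, hfuture⟩ := P.exists_splice _ hx.1.1 t ht (m - P.memory)
      (hxs.trans (hts.symm.mono (by grind)))
    exact ⟨u, hu, hpast.mono (by grind), hfuture⟩
  obtain ⟨τ, hτ⟩ := hsplice.choice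
  have hτt : Tendsto τ U (𝓝 t) := tendsto_of_eventually_apply_eq fun i => by
    filter_upwards [hτ, eventually_eqOn_of_tendsto hlim (finite_singleton i)] with x hx hxs
    rcases le_total i m with hi | hi
    · rw [hx.2.1 hi, hxs rfl, hts hi]
    · exact hx.2.2 (by grind)
  refine mem_limitLeaf (r := P.scale + r) (n := min (m - P.memory) n) (by linarith) ?_
    (P.tendsto_proj hτt ht (hτ.mono fun x hx => hx.1))
  filter_upwards [hσ, hτ] with x hx hxτ
  have hpast : CloseOn f P.scale (Iic (m - P.memory)) (P.proj (τ x)) (P.proj (σ x)) :=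
    P.closeOn_of_eqOn hxτ.1 hx.1.1 hxτ.2.1 (by grind)
  exact ⟨hx.1.2 _ hxτ.1 m hxτ.2.1, (hpast.trans hx.2.2).mono_times (by grind)⟩

lemma exists_admissible_tendsto (hr : r ≤ 49 * P.scale) (hg : ∀ᶠ x in U, g x ∈ x.plaque r n)
    (hz : Tendsto g U (𝓝 z)) :
    ∃ (σ : MarkedLeaf P → ℤ → A) (s : ℤ → A), P.Admissible (limitLeaf U) s ∧ P.proj s = z ∧
      Tendsto σ U (𝓝 s) ∧ ∀ᶠ x in U, P.Admissible x.leaf (σ x) ∧ P.proj (σ x) = g x := by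
  obtain ⟨σ, hσ⟩ := (hg.mono fun x hx => x.exists_lift (g x) hx.1).choice
  obtain ⟨s, hs, hsz, hlim⟩ := P.exists_tendsto_lift (hσ.mono fun x hx => ⟨hx.1.1, hx.2⟩) hz
  refine ⟨σ, s, admissible_limitLeaf hr (n := n) ?_ hs hlim, hsz, hlim, hσ⟩
  filter_upwards [hσ, hg] with x hx hgx
  exact ⟨hx.1, hx.2 ▸ hgx⟩

/-- The limit of an ultrafilter of marked leaves whose marked points converge. -/
def ofTendsto (U : Ultrafilter (MarkedLeaf P)) (hy : Tendsto (point (P := P)) U (𝓝 y)) :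
    MarkedLeaf P where
  point := y
  leaf := limitLeaf U
  point_mem := ⟨0, point, .of_forall fun x => x.point_mem_plaque P.scale_pos.le 0, hy⟩
  asymptotic := fun _ ⟨n, _, hg, hz⟩ =>
    ⟨n, CloseOn.of_tendsto P.continuous_zpow hz hy (hg.mono fun _ hx => hx.2)⟩
  exists_lift := fun _ ⟨_, _, hg, hz⟩ =>
    have ⟨_, s, hs, hsz, _⟩ := exists_admissible_tendsto (by linarith [P.scale_pos]) hg hz
    ⟨s, hs, hsz⟩

variable [CompactSpace Y]

lemma eventually_halfNear_ofTendsto (hy : Tendsto (point (P := P)) U (𝓝 y)) (N : ℕ) :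
    ∀ᶠ x in U, HalfNear (-N) N (ofTendsto U hy) x := by
  have he := P.scale_pos
  have hclosed := (ofTendsto U hy).isClosed_plaque (r := P.scale) (by linarith) (-N)
  refine eventually_forall_mem_of_forall_tendsto fun g z hg hz => ?_
  obtain ⟨⟨n, g', hg', hz'⟩, hzy⟩ : z ∈ (ofTendsto U hy).plaque P.scale (-N) :=
    hclosed.mem_of_tendsto hz hg
  have hwindow {h : MarkedLeaf P → Y} {w : Y} (hw : Tendsto h U (𝓝 w)) :
      ∀ᶠ x in U, CloseOn f (P.scale / 4) (Icc (-(N + n.natAbs)) (N + n.natAbs)) w (h x) :=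
    eventually_closeOn_of_tendsto P.continuous_zpow hw (by linarith) (finite_Icc _ _)
  filter_upwards [hg', hwindow hz, hwindow hz', hwindow hy] with x hgx hx hx' hxy
  have hpoint : CloseOn f (3 * P.scale) (Icc n (-N)) (g' x) x.point :=
    ((hx'.symm.trans hzy).trans hxy).mono (by linarith) (by grind)
  exact ⟨g' x, ⟨hgx.1, hgx.2.glue hpoint (by linarith) le_rfl (by grind)⟩,
    (hx.symm.trans hx').mono (by linarith) (by grind)⟩

lemma eventually_halfNear_ofTendsto_symm (hy : Tendsto (point (P := P)) U (𝓝 y)) (N : ℕ) :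
    ∀ᶠ x in U, HalfNear (-N) N x (ofTendsto U hy) := by
  refine eventually_forall_mem_of_forall_tendsto fun g z hg hz => ?_
  have hzy : CloseOn f P.scale (Iic (-N)) z y :=
    CloseOn.of_tendsto P.continuous_zpow hz hy (hg.mono fun x hx => hx.2)
  refine (eventually_closeOn_of_tendsto P.continuous_zpow hz P.scale_pos
    (finite_Icc (-(N : ℤ)) N)).mono fun x hx => ?_
  exact ⟨z, ⟨⟨-N, g, hg, hz⟩, hzy.mono_radius (by linarith [P.scale_pos])⟩, hx.symm⟩

lemma le_nhds_ofTendsto (hy : Tendsto (point (P := P)) U (𝓝 y)) : ↑U ≤ 𝓝 (ofTendsto U hy) := by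
  refine le_nhds_iff.2 fun N => ?_
  filter_upwards [eventually_closeOn_of_tendsto P.continuous_zpow hy P.scale_pos
    (finite_Icc (-(N : ℤ)) N), eventually_halfNear_ofTendsto hy N,
    eventually_halfNear_ofTendsto_symm hy N] with x hx hx' hx''
  exact ⟨hx, hx', hx''⟩

instance : CompactSpace (MarkedLeaf P) := by
  refine ⟨isCompact_iff_ultrafilter_le_nhds.2 fun U _ => ?_⟩
  obtain ⟨y, -, hy⟩ := isCompact_univ.ultrafilter_le_nhds (U.map point) (by simp)
  exact ⟨_, mem_univ _, le_nhds_ofTendsto hy⟩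

lemma leaf_eq_limitLeaf {x : MarkedLeaf P} (hU : ↑U ≤ 𝓝 x) : x.leaf = limitLeaf U := by
  have hx : x = ofTendsto U ((continuous_point.tendsto x).mono_left hU) :=
    tendsto_nhds_unique (f := id) hU (le_nhds_ofTendsto _)
  exact congrArg leaf hx

end MarkedLeaf

end Compactness

section Holonomy

variable {A Y : Type*} [TopologicalSpace A] [MetricSpace Y] {f : Equiv.Perm Y}

namespace MarkedLeaf

variable {P : SymbolicCover A f} {x x' x'' y y' : MarkedLeaf P} {ρ ρ' r r' r'' t t' : ℝ} {k n : ℤ}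

/-- Every point of the plaque of `x` of radius `r` lies within `ρ`, from time `n` on, of a point of
the plaque of `x'` of radius `r'`. -/
def HasHolonomy (ρ r r' : ℝ) (n : ℤ) (x x' : MarkedLeaf P) : Prop :=
  ∀ z ∈ x.plaque r n, ∃ z' ∈ x'.plaque r' n, CloseOn f ρ (Ici n) z z'

namespace HasHolonomy

lemma mono (h : HasHolonomy ρ r r' n x x') (hy : y.plaque t n ⊆ x.plaque r n)
    (hy' : x'.plaque r' n ⊆ y'.plaque t' n) : HasHolonomy ρ t t' n y y' :=
  fun z hz => (h z (hy hz)).imp fun _ hz' => ⟨hy' hz'.1, hz'.2⟩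

lemma trans (h : HasHolonomy ρ r r' n x x') (h' : HasHolonomy ρ' r' r'' n x' x'') :
    HasHolonomy (ρ + ρ') r r'' n x x'' := by
  intro z hz
  obtain ⟨z', hz', hzz'⟩ := h z hz
  obtain ⟨z'', hz'', hz'z''⟩ := h' z' hz'
  exact ⟨z'', hz'', (hzz'.trans hz'z'').mono_times (inter_self _).superset⟩

end HasHolonomy

lemma hasHolonomy_map_iff :
    HasHolonomy ρ r r' n (x.map k) (x'.map k) ↔ HasHolonomy ρ r r' (n + k) x x' := by
  simp only [HasHolonomy, plaque_map, forall_mem_image, exists_mem_image, closeOn_zpow_iff,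
    preimage_sub_const_Ici]

lemma leaf_subset_leaf_of_hasHolonomy (hpoint : x.point = x'.point)
    (h : ∀ n₀ : ℤ, ∃ n ≤ n₀, HasHolonomy (2 * P.scale) (2 * P.scale) (6 * P.scale) n x x') :
    x.leaf ⊆ x'.leaf := by
  intro z hz
  have he := P.scale_pos
  obtain ⟨n₀, hn₀⟩ := exists_mem_plaque hz
  obtain ⟨n, hn, hhol⟩ := h n₀
  have hzn : z ∈ x.plaque (2 * P.scale) n := x.plaque_mono (by linarith) hn hn₀
  obtain ⟨z', hz', hzz'⟩ := hhol z hzn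
  have hpast : CloseOn f (2 * P.scale + 6 * P.scale) (Iic n ∩ Iic n) z z' :=
    (hpoint ▸ hzn.2).trans hz'.2.symm
  have hz_eq : z = z' := P.eq_of_closeOn hpast hzz' (by linarith) (by linarith) (by grind)
  exact hz_eq ▸ hz'.1

variable [DiscreteTopology A] [CompactSpace Y]

/-- A limit of points of plaques near `x` has a lift that is admissible for the leaf of `x`;
splicing its past to the future of a lift of a nearby point gives the holonomy image of the
latter. -/
lemma eventually_hasHolonomy_self (x : MarkedLeaf P) :
    ∀ᶠ x' in 𝓝 x, HasHolonomy P.scale (2 * P.scale) (3 * P.scale) 0 x' x := by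
  refine mem_iff_ultrafilter.2 fun U hU =>
    eventually_forall_mem_of_forall_tendsto fun g z hg hz => ?_
  obtain ⟨σ, s, hs, rfl, hlim, hσ⟩ :=
    exists_admissible_tendsto (by linarith [P.scale_pos]) hg hz
  rw [← leaf_eq_limitLeaf hU] at hs
  have hsx : CloseOn f (2 * P.scale) (Iic 0) (P.proj s) x.point :=
    CloseOn.of_tendsto P.continuous_zpow hz ((continuous_point.tendsto x).mono_left hU)
      (hg.mono fun x' hx' => hx'.2)
  filter_upwards [hσ, eventually_eqOn_of_tendsto hlim
    (finite_Icc (0 - P.memory : ℤ) (0 + P.memory))] with x' hx' hx's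
  obtain ⟨z, hzx, hpast, hfuture⟩ := hs.exists_bracket hx'.1.1 (k := 0) hx's.symm
  rw [hx'.2] at hfuture
  exact ⟨z, ⟨hzx, (hpast.trans hsx).mono (by linarith) (by grind)⟩, hfuture.symm⟩

lemma exists_lift_eventually_admissible {U : Ultrafilter (MarkedLeaf P)} (hU : ↑U ≤ 𝓝 x) {z : Y}
    (hz : z ∈ x.plaque (3 * P.scale) 0) {I : Set ℤ} (hI : I.Finite) :
    ∃ s ∈ P.shift, P.proj s = z ∧ ∀ᶠ x' : MarkedLeaf P in U, ∃ s', P.Admissible x'.leaf s' ∧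
      EqOn s' s I ∧ P.proj s' ∈ x'.plaque (5 * P.scale) 0 := by
  have he := P.scale_pos
  obtain ⟨hzx, hclose⟩ := hz
  rw [leaf_eq_limitLeaf hU] at hzx
  obtain ⟨n, g, hg, hz⟩ := hzx
  obtain ⟨σ, s, hs, hsz, hlim, hσ⟩ := exists_admissible_tendsto (by linarith) hg hz
  have hpoint : Tendsto point U (𝓝 x.point) := (continuous_point.tendsto x).mono_left hU
  have hwindow {h : MarkedLeaf P → Y} {w : Y} (hw : Tendsto h U (𝓝 w)) :
      ∀ᶠ x' in U, CloseOn f P.scale (Icc n 0) w (h x') :=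
    eventually_closeOn_of_tendsto P.continuous_zpow hw he (finite_Icc _ _)
  refine ⟨s, hs.1, hsz, ?_⟩
  filter_upwards [hg, hσ, eventually_eqOn_of_tendsto hlim hI, hwindow hz, hwindow hpoint]
    with x' hgx' hσx' hs' hzx' hxx'
  have hmid : CloseOn f (5 * P.scale) (Icc n 0) (g x') x'.point :=
    ((hzx'.symm.trans hclose).trans hxx').mono (by linarith) (by grind)
  exact ⟨σ x', hσx'.1, hs', hσx'.2 ▸ hgx'.1,
    hσx'.2 ▸ hgx'.2.glue hmid (by linarith) le_rfl (by grind)⟩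

/-- A bracket only depends on a central word of bounded length, and there are finitely many of
those, which makes the neighbourhood uniform over the plaque of `x`. -/
lemma eventually_hasHolonomy [Finite A] (x : MarkedLeaf P) :
    ∀ᶠ x' in 𝓝 x, HasHolonomy P.scale (3 * P.scale) (6 * P.scale) 0 x x' := by
  refine mem_iff_ultrafilter.2 fun U hU => ?_
  let I : Set ℤ := Icc (0 - P.memory) (0 + P.memory)
  let Realizes (x' : MarkedLeaf P) (w : I → A) : Prop :=
    ∃ s, P.Admissible x'.leaf s ∧ (∀ i : I, s i = w i) ∧ P.proj s ∈ x'.plaque (5 * P.scale) 0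
  have huniform : ∀ᶠ x' in U, ∀ w, (∀ᶠ y in U, Realizes y w) → Realizes x' w :=
    eventually_all.2 fun w => eventually_imp_distrib_left.2 id
  filter_upwards [huniform] with x' hx' z hz
  obtain ⟨s, hs, rfl, hword⟩ := exists_lift_eventually_admissible hU hz (finite_Icc _ _ : I.Finite)
  obtain ⟨s', hs', heq, hplaque⟩ := hx' (fun i => s i) <| hword.mono
    fun y ⟨s', hs', heq, hplaque⟩ => ⟨s', hs', fun i => heq i.2, hplaque⟩
  obtain ⟨z', hz', hpast, hfuture⟩ := hs'.exists_bracket hs (k := 0) fun i hi => heq ⟨i, hi⟩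
  exact ⟨z', ⟨hz', (hpast.trans hplaque.2).mono (by linarith) (by grind)⟩, hfuture.symm⟩

variable (P) [Finite A]

lemma exists_near_imp_hasHolonomy :
    ∃ N : ℕ, ∀ (n : ℤ) (x x' : MarkedLeaf P), Near (-N + n) (N + n) x x' →
      HasHolonomy (2 * P.scale) (2 * P.scale) (6 * P.scale) n x x' := by
  have hmem : {z : MarkedLeaf P × MarkedLeaf P |
      HasHolonomy (P.scale + P.scale) (2 * P.scale) (6 * P.scale) 0 z.1 z.2} ∈
      uniformity (MarkedLeaf P) := by
    rw [compactSpace_uniformity]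
    refine mem_iSup.2 fun x => ?_
    rw [nhds_prod_eq]
    filter_upwards [prod_mem_prod (eventually_hasHolonomy_self x) (eventually_hasHolonomy x)]
      with z hz
    exact hz.1.trans hz.2
  obtain ⟨N, -, hN⟩ := hasBasis_uniformity.mem_iff.1 hmem
  refine ⟨N, fun n x x' h => ?_⟩
  have hzero := hN (show (x.map n, x'.map n) ∈ _ from near_map_iff.2 h)
  simpa only [← two_mul, zero_add] using hasHolonomy_map_iff.1 hzero

lemma exists_near_past_imp_eq :
    ∃ N : ℕ, ∀ x x' : MarkedLeaf P, x.point = x'.point →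
      (∀ n₀ : ℤ, ∃ n ≤ n₀, Near (-N + n) (N + n) x x') → x = x' := by
  obtain ⟨N, hN⟩ := exists_near_imp_hasHolonomy P
  refine ⟨N, fun x x' hpoint h => MarkedLeaf.ext hpoint <| Subset.antisymm ?_ ?_⟩
  · exact leaf_subset_leaf_of_hasHolonomy hpoint fun n₀ =>
      (h n₀).imp fun n hn => ⟨hn.1, hN n x x' hn.2⟩
  · exact leaf_subset_leaf_of_hasHolonomy hpoint.symm fun n₀ =>
      (h n₀).imp fun n hn => ⟨hn.1, hN n x' x hn.2.symm⟩

lemma exists_near_imp_eq :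
    ∃ N : ℕ, ∀ x x' : MarkedLeaf P, (∀ n : ℤ, Near (-N + n) (N + n) x x') → x = x' := by
  obtain ⟨N, hN⟩ := exists_near_past_imp_eq P
  refine ⟨N, fun x x' h => hN x x' ?_ fun n₀ => ⟨n₀, le_rfl, h n₀⟩⟩
  exact P.expansive.eq_of_closeOn fun i _ =>
    ((h i).closeOn i (by grind)).trans (by linarith [P.scale_pos])

end MarkedLeaf

end Holonomy

section Bracket

variable {A Y : Type*} [TopologicalSpace A] [MetricSpace Y] {f : Equiv.Perm Y}

namespace MarkedLeaf

variable {P : SymbolicCover A f} {x x' : MarkedLeaf P} {a b m : ℤ}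

lemma halfNear_of_hasHolonomy (hpoint : CloseOn f (20 * P.scale) (Ici m) x.point x'.point)
    (h : HasHolonomy (2 * P.scale) P.scale (20 * P.scale) m x x')
    (ha : m + 2 * P.horizon ≤ a) : HalfNear a b x x' := by
  intro z hz
  have he := P.scale_pos
  obtain ⟨z', hz', hzz'⟩ := h z (x.plaque_mono le_rfl (by grind) hz)
  have hzz'small : CloseOn f (P.scale / 4) (Ici (m + P.horizon)) z z' :=
    P.closeOn_scale_div_four hzz' (by linarith) (by grind)
  have hpoint_small : CloseOn f (P.scale / 4) (Ici (m + P.horizon)) x.point x'.point :=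
    P.closeOn_scale_div_four hpoint (by linarith) (by grind)
  have hcoarse : CloseOn f (23 * P.scale) (Iic a) z' x'.point :=
    hz'.2.glue ((hzz'.symm.trans hz.2).trans hpoint) (by linarith) (by linarith) (by grind)
  have hpast : CloseOn f (P.scale / 4) (Iic (a - P.horizon)) z' x'.point :=
    P.closeOn_scale_div_four hcoarse (by linarith) (by grind)
  have hfine : CloseOn f (3 * P.scale) (Iic a) z' x'.point :=
    hpast.glue ((hzz'small.symm.trans hz.2).trans hpoint_small) (by linarith) (by linarith)
      (by grind)
  exact ⟨z', ⟨hz'.1, hfine⟩, hzz'small.mono (by linarith) (by grind)⟩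

lemma near_of_hasHolonomy (hpoint : CloseOn f (20 * P.scale) (Ici m) x.point x'.point)
    (h : HasHolonomy (2 * P.scale) P.scale (20 * P.scale) m x x')
    (h' : HasHolonomy (2 * P.scale) P.scale (20 * P.scale) m x' x)
    (ha : m + 2 * P.horizon ≤ a) : Near a b x x' := by
  refine ⟨?_, halfNear_of_hasHolonomy hpoint h ha, halfNear_of_hasHolonomy hpoint.symm h' ha⟩
  have hcontract : CloseOn f (P.scale / 4) (Icc a b) x.point x'.point :=
    P.closeOn_scale_div_four hpoint (by linarith [P.scale_pos]) (by grind)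
  exact hcontract.mono_radius (by linarith [P.scale_pos])

lemma halfNear_of_leaf_eq (hleaf : x.leaf = x'.leaf)
    (h : CloseOn f (P.scale / 4) (Iic a) x.point x'.point) : HalfNear a b x x' := by
  have he := P.scale_pos
  exact fun z hz => ⟨z, x'.plaque_mono (by linarith) le_rfl
    (plaque_subset_plaque_of_leaf_eq hleaf h hz), CloseOn.refl f he.le _ z⟩

lemma near_of_leaf_eq (hleaf : x.leaf = x'.leaf)
    (h : CloseOn f (P.scale / 4) (Iic b) x.point x'.point) (hab : a ≤ b) : Near a b x x' := by
  have hpast : CloseOn f (P.scale / 4) (Iic a) x.point x'.point :=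
    h.mono_times (Iic_subset_Iic.2 hab)
  exact ⟨h.mono (by linarith [P.scale_pos]) Icc_subset_Iic_self, halfNear_of_leaf_eq hleaf hpast,
    halfNear_of_leaf_eq hleaf.symm hpast.symm⟩

lemma near_rebase {z : Y} (hz : z ∈ x'.leaf) (hxz : CloseOn f (20 * P.scale) (Ici m) x.point z)
    (hzx' : CloseOn f (P.scale / 4) (Iic m) z x'.point)
    (h : HasHolonomy (2 * P.scale) (2 * P.scale) (6 * P.scale) m x x')
    (h' : HasHolonomy (2 * P.scale) (2 * P.scale) (6 * P.scale) m x' x)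
    (ha : m + 2 * P.horizon ≤ a) : Near a b x (x'.rebase z hz) := by
  have he := P.scale_pos
  have hto {r : ℝ} : x'.plaque r m ⊆ (x'.rebase z hz).plaque (r + P.scale / 4) m :=
    plaque_subset_plaque_of_leaf_eq rfl hzx'.symm
  have hfrom {r : ℝ} : (x'.rebase z hz).plaque r m ⊆ x'.plaque (r + P.scale / 4) m :=
    plaque_subset_plaque_of_leaf_eq rfl hzx'
  refine near_of_hasHolonomy hxz (h.mono ?_ ?_) (h'.mono ?_ ?_) ha
  · exact x.plaque_mono (by linarith) le_rfl
  · exact hto.trans (plaque_mono _ (by linarith) le_rfl)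
  · exact hfrom.trans (x'.plaque_mono (by linarith) le_rfl)
  · exact x.plaque_mono (by linarith) le_rfl

variable (P) [Finite A] [DiscreteTopology A] [CompactSpace Y]

lemma exists_bracket (B : ℕ) :
    ∃ N : ℕ, ∀ x x' : MarkedLeaf P, Near (-N) N x x' → ∃ w : MarkedLeaf P,
      (∀ a b : ℤ, -B ≤ a → Near a b x w) ∧ ∀ a b : ℤ, a ≤ b → b ≤ B → Near a b x' w := by
  have he := P.scale_pos
  obtain ⟨K, hK⟩ := exists_near_imp_hasHolonomy P
  let N : ℕ := K + B + 3 * P.horizon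
  have hhol {n : ℤ} (hn : -(B + 2 * P.horizon) ≤ n) (hn' : n ≤ 0) {y y' : MarkedLeaf P}
      (hy : Near (-N) N y y') :
      HasHolonomy (2 * P.scale) (2 * P.scale) (6 * P.scale) n y y' :=
    hK n y y' (hy.mono (by grind) (by grind) (by grind))
  refine ⟨N, fun x x' h => ?_⟩
  obtain ⟨z, hz, hfuture⟩ :=
    hhol (by grind) le_rfl h x.point (x.point_mem_plaque (by linarith) 0)
  have hcoarse : CloseOn f (6 * P.scale) (Iic (N : ℤ)) z x'.point :=
    hz.2.glue (hfuture.symm.trans h.closeOn) le_rfl (by linarith) (by grind)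
  have hpast : CloseOn f (P.scale / 4) (Iic (N - P.horizon : ℤ)) z x'.point :=
    P.closeOn_scale_div_four hcoarse (by linarith) (by grind)
  have hxz : CloseOn f (20 * P.scale) (Ici (-(B + 2 * P.horizon))) x.point z :=
    (h.closeOn.trans hz.2.symm).glue hfuture (by linarith) (by linarith) (by grind)
  exact ⟨x'.rebase z hz.1,
    fun a b ha => near_rebase hz.1 hxz (hpast.mono_times (by grind)) (hhol le_rfl (by grind) h)
      (hhol le_rfl (by grind) h.symm) (by grind),
    fun a b hab hb => near_of_leaf_eq rfl (hpast.symm.mono_times (by grind)) hab⟩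

end MarkedLeaf

end Bracket

section Metric

variable {A Y : Type*} [TopologicalSpace A] [DiscreteTopology A] [MetricSpace Y] [CompactSpace Y]
  {f : Equiv.Perm Y}

namespace MarkedLeaf

noncomputable instance (P : SymbolicCover A f) : MetricSpace (MarkedLeaf P) :=
  UniformSpace.metricSpace _

variable (P : SymbolicCover A f)

lemma exists_near_imp_dist_lt {ε : ℝ} (hε : 0 < ε) :
    ∃ N : ℕ, ∀ (n : ℤ) (x x' : MarkedLeaf P), Near (-N + n) (N + n) x x' →
      dist ((extend P ^ n) x) ((extend P ^ n) x') < ε := by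
  obtain ⟨N, -, hN⟩ :=
    (hasBasis_uniformity (P := P)).mem_iff.1 (Metric.dist_mem_uniformity hε)
  refine ⟨N, fun n x x' h => ?_⟩
  rw [extend_zpow_apply, extend_zpow_apply]
  exact hN (show (x.map n, x'.map n) ∈ _ from near_map_iff.2 h)

lemma exists_dist_lt_imp_near (N : ℕ) :
    ∃ δ > 0, ∀ (n : ℤ) (x x' : MarkedLeaf P),
      dist ((extend P ^ n) x) ((extend P ^ n) x') < δ → Near (-N + n) (N + n) x x' := by
  obtain ⟨δ, hδ, h⟩ :=
    Metric.mem_uniformity_dist.1 ((hasBasis_uniformity (P := P)).mem_of_mem (i := N) trivial)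
  refine ⟨δ, hδ, fun n x x' hx => near_map_iff.1 (h ?_)⟩
  rwa [extend_zpow_apply, extend_zpow_apply] at hx

lemma isFactorMap_point : IsFactorMap (extend P) f point :=
  ⟨continuous_point, fun y => ⟨maximal P y, rfl⟩, fun x => by simp [map]⟩

variable [Finite A]

lemma exists_expansive_extend : ∃ c > 0, Expansive (extend P) c := by
  obtain ⟨N, hN⟩ := exists_near_imp_eq P
  obtain ⟨δ, hδ, hnear⟩ := exists_dist_lt_imp_near P N
  refine ⟨δ / 2, half_pos hδ, fun x x' hne => ?_⟩
  contrapose! hne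
  exact hN x x' fun n => hnear n x x' ((hne n).trans_lt (half_lt_self hδ))

lemma isSmale_extend : IsSmale (extend P) := by
  obtain ⟨c, hc, hexp⟩ := exists_expansive_extend P
  refine ⟨(uniformContinuous_map 1).continuous, (uniformContinuous_map (-1)).continuous,
    ⟨c, hc, hexp⟩, hexp.canonicalCoords hc fun ε hε => ?_⟩
  obtain ⟨B, hB⟩ := exists_near_imp_dist_lt P hε
  obtain ⟨N, hN⟩ := exists_bracket P B
  obtain ⟨δ, hδ, hnear⟩ := exists_dist_lt_imp_near P N
  refine ⟨δ, hδ, fun x x' hxx' => ?_⟩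
  obtain ⟨w, hw, hw'⟩ := hN x x' (by simpa using hnear 0 x x' (by simpa using hxx'))
  exact ⟨w, fun n => hB n x w (hw _ _ (by grind)),
    fun n => hB (-n) x' w (hw' _ _ (by grind) (by grind))⟩

lemma uResolving_point : UResolving (extend P) (point : MarkedLeaf P → Y) := by
  intro x y hy y' hy' hpoint
  obtain ⟨N, hN⟩ := exists_near_past_imp_eq P
  obtain ⟨δ, hδ, hnear⟩ := exists_dist_lt_imp_near P N
  refine hN y y' hpoint fun n₀ => ?_
  have hclose : ∀ {w : MarkedLeaf P}, w ∈ unstableSet (extend P) x → ∀ᶠ n : ℕ in atTop,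
      dist ((extend P ^ (-n : ℤ)) x) ((extend P ^ (-n : ℤ)) w) < δ / 2 :=
    fun hw => Tendsto.eventually_lt_const (half_pos hδ) hw
  obtain ⟨n, hn, hn', hle⟩ :=
    ((hclose hy).and ((hclose hy').and (eventually_ge_atTop n₀.natAbs))).exists
  refine ⟨-n, by grind, hnear (-n) y y' ?_⟩
  exact (dist_triangle_left _ _ _).trans_lt ((add_lt_add hn hn').trans_eq (add_halves δ))

end MarkedLeaf

end Metric

universe u

theorem stmt5_general {Y : Type u} [MetricSpace Y] (f : Equiv.Perm Y) (hY : FinitelyPresented f) :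
    ∃ (X : Type u) (_ : MetricSpace X) (_ : CompactSpace X) (F : Equiv.Perm X),
      IsSmale F ∧ ∃ π : X → Y, IsFactorMap F f π ∧ UResolving F π := by
  have := hY.compactSpace
  obtain ⟨N, ⟨P⟩⟩ := hY.exists_symbolicCover
  exact ⟨MarkedLeaf P, inferInstance, inferInstance, MarkedLeaf.extend P,
    MarkedLeaf.isSmale_extend P, MarkedLeaf.point, MarkedLeaf.isFactorMap_point P,
    MarkedLeaf.uResolving_point P⟩

/-- Every finitely presented system has a Smale space extension with a
u-resolving factor map. -/
theorem stmt5 {Y : Type} [MetricSpace Y] [CompactSpace Y] (f : Equiv.Perm Y)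
    (hY : FinitelyPresented f) :
    ∃ (X : Type) (mX : MetricSpace X) (cX : CompactSpace X) (F : Equiv.Perm X),
      IsSmale F ∧ ∃ π : X → Y, IsFactorMap F f π ∧ UResolving F π :=
  stmt5_general f hY
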